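/- arXiv:math/0207031 — 2 statements merged into one kernel-verified Lean document; each statement's English description precedes it below -/
import Mathlib

section
/- In the universal enveloping algebra U(gl(m,ℂ)), for all q ≥ 0 and all indices 1 ≤ i,j,k,l ≤ m, the commutator identity [e_{ij}, e_{kl}^q] = δ_{jk}·e_{il}^q − δ_{il}·e_{kj}^q holds, where [a,b] = ab − ba. -/
open Finset

attribute [local instance 100] LieRing.ofAssociativeRing

/-- `gl(m, ℂ)`: the Lie algebra of `m × m` complex matrices. -/
abbrev glm (m : ℕ) := Matrix (Fin m) (Fin m) ℂ

/-- The universal enveloping algebra `U(gl(m,ℂ))`. -/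
abbrev UEA (m : ℕ) := UniversalEnvelopingAlgebra ℂ (glm m)

/-- The image of the matrix unit `e_{kl}` in `U(gl(m,ℂ))`. -/
noncomputable def E {m : ℕ} (k l : Fin m) : UEA m :=
  UniversalEnvelopingAlgebra.ι ℂ (Matrix.single k l (1 : ℂ))

/-- `e_{kl}^q`, defined by `e_{kl}^0 = δ_{kl}` and `e_{kl}^{q+1} = Σ_i e_{ki} e_{il}^q`. -/
noncomputable def Epow {m : ℕ} : ℕ → Fin m → Fin m → UEA m
  | 0, k, l => if k = l then 1 else 0
  | q + 1, k, l => ∑ i, E k i * Epow q i l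

theorem E_comm {m : ℕ} (i j k l : Fin m) :
    E i j * E k l - E k l * E i j =
      (if j = k then E i l else 0) - (if i = l then E k j else 0) := by
  have h := LieHom.map_lie (UniversalEnvelopingAlgebra.ι ℂ)
    (Matrix.single i j (1 : ℂ)) (Matrix.single k l (1 : ℂ))
  rw [LieRing.of_associative_ring_bracket, LieRing.of_associative_ring_bracket] at h
  unfold E
  rw [← h, map_sub]
  congr 1
  · split_ifs with hjk
    · subst hjk; simp
    · rw [Matrix.single_mul_single_of_ne _ _ _ _ hjk, map_zero]
  · split_ifs with hil
    · subst hil; simp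
    · rw [Matrix.single_mul_single_of_ne _ _ _ _ (Ne.symm hil), map_zero]

/-- `[e_{ij}, e_{kl}^q] = δ_{jk} e_{il}^q − δ_{il} e_{kj}^q`. -/
theorem statement0 (m : ℕ) (hm : 1 ≤ m) (q : ℕ) (i j k l : Fin m) :
    E i j * Epow q k l - Epow q k l * E i j =
      (if j = k then Epow (m := m) q i l else 0) -
        (if i = l then Epow (m := m) q k j else 0) := by
  induction q generalizing k l with
  | zero =>
    simp only [Epow]
    have h0 : E i j * (if k = l then 1 else 0) - (if k = l then 1 else 0) * E i j = 0 := by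
      by_cases h : k = l <;> simp [h]
    rw [h0]
    by_cases hjk : j = k
    · subst hjk
      by_cases hil : i = l
      · subst hil; simp
      · simp [hil]
    · have hkj : ¬ k = j := fun h => hjk h.symm
      simp [hjk, hkj]
  | succ q ih =>
    simp only [Epow]
    have key : ∀ a : Fin m, E i j * (E k a * Epow q a l) - E k a * Epow q a l * E i j =
        ((if j = k then E i a * Epow q a l else 0) - (if i = a then E k j * Epow q a l else 0))
        + ((if j = a then E k a * Epow q i l else 0)
          - (if i = l then E k a * Epow q a j else 0)) := by
      intro a
      have h1 := E_comm i j k a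
      have h2 := ih a l
      calc _ = (E i j * E k a - E k a * E i j) * Epow q a l
            + E k a * (E i j * Epow q a l - Epow q a l * E i j) := by noncomm_ring
        _ = _ := by
          rw [h1, h2]
          simp only [sub_mul, mul_sub, ite_mul, mul_ite, zero_mul, mul_zero]
    rw [Finset.mul_sum, Finset.sum_mul, ← Finset.sum_sub_distrib, Finset.sum_congr rfl (fun a _ => key a)]
    rw [Finset.sum_add_distrib, Finset.sum_sub_distrib, Finset.sum_sub_distrib]
    simp only [Finset.sum_ite_eq, Finset.mem_univ, if_true]
    split_ifs <;> simp <;> abel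
end

section
/- (Perelomov–Popov formula for c_q.) Let V be a complex Lie module over gl(m,ℂ), let ρ = (ρ^1,…,ρ^m) ∈ ℤ^m with ρ^1 ≥ ρ^2 ≥ … ≥ ρ^m, and let v ∈ V satisfy e_{ij}·v = 0 for all i < j and e_{kk}·v = ρ^k v for all k. Then for every q ≥ 0, Σ_{k=1}^m e_{kk}^q v = (Σ_{i=1}^m w_{-i}^q γ_{-i}) v, where w_{-i} := ρ^i + (m − i) and γ_{-i} := Π_{j≠i} (1 − 1/(w_{-i} − w_{-j})). -/
open Finset

attribute [local instance 100] LieRing.ofAssociativeRing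

/-- The operators `e_{kl}^q` on a `gl(m,ℂ)`-module `V`:
`e_{kl}^0 w = δ_{kl} w` and `e_{kl}^{q+1} w = Σ_i e_{ki}·(e_{il}^q w)`. -/
noncomputable def epowV {m : ℕ} {V : Type*} [AddCommGroup V]
    [LieRingModule (glm m) V] :
    ℕ → Fin m → Fin m → V → V
  | 0, k, l, w => if k = l then w else 0
  | q + 1, k, l, w => ∑ i, ⁅Matrix.single k i (1 : ℂ), epowV q i l w⁆

/-- The operators `ẽ_{kl}^q` on a `gl(m,ℂ)`-module `V`:
`ẽ_{kl}^0 w = δ_{kl} w` and `ẽ_{kl}^{q+1} w = −Σ_i e_{ik}·(ẽ_{il}^q w)`. -/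
noncomputable def etilV {m : ℕ} {V : Type*} [AddCommGroup V]
    [LieRingModule (glm m) V] :
    ℕ → Fin m → Fin m → V → V
  | 0, k, l, w => if k = l then w else 0
  | q + 1, k, l, w => -∑ i, ⁅Matrix.single i k (1 : ℂ), etilV q i l w⁆

/-- The `(0,1)`-conformal weight `w_{-i} = ρ^i + (m − i)` (here `i : Fin m` corresponds to
the index `i+1` of the paper, so `w_{-i} = ρ_i + m − 1 − i`). -/
noncomputable def wMinus (m : ℕ) (ρ : Fin m → ℤ) (i : Fin m) : ℂ :=
  (ρ i : ℂ) + ((m : ℂ) - 1 - (i : ℕ))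

theorem aux_single_lie {m : ℕ} (i j k p : Fin m) :
    ⁅(Matrix.single i j (1 : ℂ) : glm m), (Matrix.single k p (1 : ℂ) : glm m)⁆ =
      (if j = k then Matrix.single i p (1 : ℂ) else 0) -
      (if i = p then Matrix.single k j (1 : ℂ) else 0) := by
  rw [Ring.lie_def]
  congr 1
  · split_ifs with h
    · subst h; simp
    · simp [h]
  · split_ifs with h
    · subst h; simp
    · rw [Matrix.single_mul_single_of_ne]
      exact fun h' => h h'.symm

theorem aux_epowV_zero {m : ℕ} {V : Type*} [AddCommGroup V]
    [LieRingModule (glm m) V] (q : ℕ) (k l : Fin m) :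
    epowV (m := m) q k l (0 : V) = 0 := by
  induction q generalizing k l with
  | zero => simp [epowV]
  | succ q ih => simp [epowV, ih]

theorem aux_comm {m : ℕ} {V : Type*} [AddCommGroup V]
    [LieRingModule (glm m) V] (q : ℕ) (i j k l : Fin m) (w : V) :
    ⁅(Matrix.single i j (1 : ℂ) : glm m), epowV (m := m) q k l w⁆ =
      epowV (m := m) q k l ⁅(Matrix.single i j (1 : ℂ) : glm m), w⁆
      + (if j = k then epowV (m := m) q i l w else 0)
      - (if i = l then epowV (m := m) q k j w else 0) := by
  induction q generalizing k l with
  | zero =>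
    simp only [epowV]
    by_cases h1 : k = l <;> by_cases h2 : j = k <;> by_cases h3 : i = l <;> simp_all
    · rw [if_neg (fun h => h2 h.symm), sub_zero]
    · exact fun h => absurd h.symm h2
  | succ q ih =>
    simp only [epowV]
    rw [lie_sum]
    have key : ∀ p : Fin m,
        ⁅(Matrix.single i j (1 : ℂ) : glm m),
          ⁅(Matrix.single k p (1 : ℂ) : glm m), epowV (m := m) q p l w⁆⁆ =
        (if j = k then ⁅(Matrix.single i p (1 : ℂ) : glm m), epowV (m := m) q p l w⁆ else 0)
        - (if i = p then ⁅(Matrix.single k j (1 : ℂ) : glm m), epowV (m := m) q p l w⁆ else 0)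
        + (⁅(Matrix.single k p (1 : ℂ) : glm m),
            epowV (m := m) q p l ⁅(Matrix.single i j (1 : ℂ) : glm m), w⁆⁆
          + (if j = p then ⁅(Matrix.single k p (1 : ℂ) : glm m), epowV (m := m) q i l w⁆ else 0)
          - (if i = l then ⁅(Matrix.single k p (1 : ℂ) : glm m), epowV (m := m) q p j w⁆
              else 0)) := by
      intro p
      rw [leibniz_lie, ih p l, aux_single_lie, sub_lie, lie_sub, lie_add]
      split_ifs <;> simp
    rw [Finset.sum_congr rfl (fun p _ => key p)]
    simp only [Finset.sum_add_distrib, Finset.sum_sub_distrib]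
    simp only [Finset.sum_ite_eq, Finset.mem_univ, if_true]
    split_ifs <;> (try simp only [Finset.sum_const_zero]) <;> abel

theorem aux_upper {m : ℕ} {V : Type*} [AddCommGroup V]
    [LieRingModule (glm m) V] (v : V)
    (hv1 : ∀ i j : Fin m, i < j → ⁅(Matrix.single i j (1 : ℂ) : glm m), v⁆ = 0)
    (q : ℕ) (k l : Fin m) (h : k < l) : epowV (m := m) q k l v = 0 := by
  induction q generalizing k l with
  | zero => simp [epowV, h.ne]
  | succ q ih =>
    simp only [epowV]
    refine Finset.sum_eq_zero fun i _ => ?_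
    by_cases hi : i < l
    · rw [ih i l hi, lie_zero]
    · have hki : k < i := lt_of_lt_of_le h (not_lt.mp hi)
      rw [aux_comm, hv1 k i hki, aux_epowV_zero, ih k l h]
      simp [h.ne]

/-- The scalars by which the diagonal operators act. -/
noncomputable def auxA {m : ℕ} (w : Fin m → ℂ) : ℕ → Fin m → ℂ
  | 0, _ => 1
  | q + 1, k => w k * auxA w q k - ∑ i ∈ Finset.Ioi k, auxA w q i

theorem aux_diag {m : ℕ} {V : Type*} [AddCommGroup V] [Module ℂ V]
    [LieRingModule (glm m) V] [LieModule ℂ (glm m) V]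
    (ρ : Fin m → ℤ) (v : V)
    (hv1 : ∀ i j : Fin m, i < j → ⁅(Matrix.single i j (1 : ℂ) : glm m), v⁆ = 0)
    (hv2 : ∀ k : Fin m, ⁅(Matrix.single k k (1 : ℂ) : glm m), v⁆ = (ρ k : ℂ) • v)
    (q : ℕ) (k : Fin m) :
    epowV (m := m) q k k v = auxA (wMinus m ρ) q k • v := by
  induction q generalizing k with
  | zero => simp [epowV, auxA]
  | succ q ih =>
    simp only [epowV, auxA]
    have h0 : ∀ i : Fin m, ⁅(Matrix.single k i (1 : ℂ) : glm m), epowV (m := m) q i k v⁆ =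
        ((if i = k then (ρ k : ℂ) * auxA (wMinus m ρ) q k else 0) +
         (if k < i then auxA (wMinus m ρ) q k - auxA (wMinus m ρ) q i else 0)) • v := by
      intro i
      rcases lt_trichotomy i k with h | h | h
      · rw [aux_upper v hv1 q i k h, lie_zero]
        simp [h.ne, h.not_gt]
      · subst h
        rw [ih, lie_smul, hv2]
        simp [smul_smul, mul_comm]
      · rw [aux_comm, hv1 k i h, aux_epowV_zero]
        simp [h, h.ne', ih, sub_smul]
    rw [Finset.sum_congr rfl (fun i _ => h0 i), ← Finset.sum_smul]
    congr 1
    rw [Finset.sum_add_distrib, Finset.sum_ite_eq' , ← Finset.sum_filter]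
    have hf : Finset.univ.filter (fun i => k < i) = Finset.Ioi k := by ext; simp
    rw [hf, Finset.sum_sub_distrib, Finset.sum_const, Fin.card_Ioi]
    have hk := k.2
    have hc : ((m - 1 - (k : ℕ) : ℕ) : ℂ) = (m : ℂ) - 1 - (k : ℕ) := by
      rw [Nat.cast_sub (by omega), Nat.cast_sub (by omega)]; simp
    simp only [Finset.mem_univ, if_true, nsmul_eq_mul, hc, wMinus]
    ring

theorem aux_pf {ι : Type*} [DecidableEq ι] (w : ι → ℂ) (hw : Function.Injective w)
    (s : Finset ι) (u : ℂ) (hu : ∀ i ∈ s, u ≠ w i) :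
    ∏ j ∈ s, (1 - 1 / (u - w j)) =
      1 - ∑ i ∈ s, (∏ j ∈ s.erase i, (1 - 1 / (w i - w j))) / (u - w i) := by
  induction s using Finset.induction_on generalizing u with
  | empty => simp
  | insert a s ha ih =>
    have e1 : ∀ i ∈ s, (∏ j ∈ (insert a s).erase i, (1 - 1 / (w i - w j))) =
        (1 - 1 / (w i - w a)) * ∏ j ∈ s.erase i, (1 - 1 / (w i - w j)) := by
      intro i hi
      have hia : a ≠ i := fun h => ha (h ▸ hi)
      rw [Finset.erase_insert_of_ne hia, Finset.prod_insert]
      simp [ha]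
    have hne : ∀ i ∈ s, w a ≠ w i := fun i hi h => ha (hw h ▸ hi)
    rw [Finset.prod_insert ha, Finset.sum_insert ha, Finset.erase_insert ha,
      Finset.sum_congr rfl (fun i hi => by rw [e1 i hi]), ih (w a) hne,
      ih u (fun i hi => hu i (Finset.mem_insert_of_mem hi))]
    have hua : u - w a ≠ 0 := sub_ne_zero.mpr (hu a (Finset.mem_insert_self _ _))
    have e2 : ∑ i ∈ s, ((1 - 1 / (w i - w a)) * ∏ j ∈ s.erase i, (1 - 1 / (w i - w j))) /
          (u - w i) =
        (1 - 1 / (u - w a)) * ∑ i ∈ s, (∏ j ∈ s.erase i, (1 - 1 / (w i - w j))) / (u - w i) +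
        (1 / (u - w a)) *
          ∑ i ∈ s, (∏ j ∈ s.erase i, (1 - 1 / (w i - w j))) / (w a - w i) := by
      rw [Finset.mul_sum, Finset.mul_sum, ← Finset.sum_add_distrib]
      refine Finset.sum_congr rfl fun i hi => ?_
      have h1 := sub_ne_zero.mpr (hne i hi)
      have h2 := sub_ne_zero.mpr (hne i hi).symm
      have h3 := sub_ne_zero.mpr (hu i (Finset.mem_insert_of_mem hi))
      generalize (∏ j ∈ s.erase i, (1 - 1 / (w i - w j))) = P
      field_simp
      ring
    rw [e2]
    ring

theorem aux_sum {m : ℕ} (w : Fin m → ℂ) (hw : Function.Injective w) (s : Finset (Fin m))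
    (hs : ∀ i ∈ s, ∀ j, i < j → j ∈ s) (q : ℕ) :
    ∑ i ∈ s, auxA w q i =
      ∑ i ∈ s, w i ^ q * ∏ j ∈ s.erase i, (1 - 1 / (w i - w j)) := by
  induction s using Finset.induction_on_min generalizing q with
  | empty => simp
  | insert a s has ih =>
    have ha : a ∉ s := fun h => lt_irrefl _ (has a h)
    have hsa : Finset.Ioi a = s := by
      ext j
      rw [Finset.mem_Ioi]
      refine ⟨fun h => ?_, has j⟩
      exact (Finset.mem_insert.mp (hs a (Finset.mem_insert_self _ _) j h)).resolve_left h.ne'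
    have ih' := ih (fun i hi j hij => by
      rw [← hsa, Finset.mem_Ioi]; exact (has i hi).trans hij)
    have hne : ∀ i ∈ s, w a ≠ w i := fun i hi h => ha (hw h ▸ hi)
    have e1 : ∀ i ∈ s, (∏ j ∈ (insert a s).erase i, (1 - 1 / (w i - w j))) =
        (1 - 1 / (w i - w a)) * ∏ j ∈ s.erase i, (1 - 1 / (w i - w j)) := by
      intro i hi
      have hia : a ≠ i := fun h => ha (h ▸ hi)
      rw [Finset.erase_insert_of_ne hia, Finset.prod_insert]
      simp [ha]
    have hA : ∀ q, auxA w q a = w a ^ q * ∏ j ∈ s, (1 - 1 / (w a - w j)) +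
        ∑ i ∈ s, w i ^ q * ((∏ j ∈ s.erase i, (1 - 1 / (w i - w j))) / (w a - w i)) := by
      intro q
      induction q with
      | zero =>
        simp only [auxA, pow_zero, one_mul]
        rw [aux_pf w hw s (w a) hne]; ring
      | succ q ihq =>
        rw [auxA, ihq, hsa, ih' q, mul_add, Finset.mul_sum, add_sub_assoc,
          ← Finset.sum_sub_distrib]
        congr 1
        · ring
        · refine Finset.sum_congr rfl fun i hi => ?_
          have := sub_ne_zero.mpr (hne i hi)
          generalize (∏ j ∈ s.erase i, (1 - 1 / (w i - w j))) = P
          field_simp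
          ring
    rw [Finset.sum_insert ha, Finset.sum_insert ha, Finset.erase_insert ha, hA q, ih' q,
      add_assoc, ← Finset.sum_add_distrib]
    congr 1
    refine Finset.sum_congr rfl fun i hi => ?_
    rw [e1 i hi]
    have h1 := sub_ne_zero.mpr (hne i hi)
    have h2 := sub_ne_zero.mpr (hne i hi).symm
    generalize (∏ j ∈ s.erase i, (1 - 1 / (w i - w j))) = P
    field_simp
    ring

theorem aux_inj (m : ℕ) (ρ : Fin m → ℤ) (hρ : ∀ i j : Fin m, i ≤ j → ρ j ≤ ρ i) :
    Function.Injective (wMinus m ρ) := by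
  intro i j h
  have h' : ρ i - (i : ℕ) = ρ j - (j : ℕ) := by
    have : ((ρ i - (i : ℕ) : ℤ) : ℂ) = ((ρ j - (j : ℕ) : ℤ) : ℂ) := by
      simp only [wMinus] at h
      push_cast
      linear_combination h
    exact_mod_cast this
  rcases le_total i j with hij | hij
  · have := hρ i j hij
    have h2 : (i : ℕ) ≤ j := hij
    apply Fin.ext; omega
  · have := hρ j i hij
    have h2 : (j : ℕ) ≤ i := hij
    apply Fin.ext; omega

/-- Perelomov–Popov formula for `c_q`: on a highest weight vector of weight
`ρ` with `ρ^1 ≥ … ≥ ρ^m`, `Σ_k e_{kk}^q` acts by `Σ_i w_{-i}^q γ_{-i}` with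
`γ_{-i} = Π_{j≠i} (1 − 1/(w_{-i} − w_{-j}))`. -/
theorem statement6 (m : ℕ) (hm : 1 ≤ m) {V : Type*} [AddCommGroup V] [Module ℂ V]
    [LieRingModule (glm m) V] [LieModule ℂ (glm m) V]
    (ρ : Fin m → ℤ) (hρ : ∀ i j : Fin m, i ≤ j → ρ j ≤ ρ i)
    (v : V)
    (hv1 : ∀ i j : Fin m, i < j → ⁅Matrix.single i j (1 : ℂ), v⁆ = 0)
    (hv2 : ∀ k : Fin m, ⁅Matrix.single k k (1 : ℂ), v⁆ = (ρ k : ℂ) • v)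
    (q : ℕ) :
    ∑ k : Fin m, epowV (m := m) q k k v =
      (∑ i : Fin m, (wMinus m ρ i) ^ q *
        ∏ j ∈ Finset.univ.erase i, (1 - 1 / (wMinus m ρ i - wMinus m ρ j))) • v := by
  rw [Finset.sum_congr rfl (fun k _ => aux_diag ρ v hv1 hv2 q k), ← Finset.sum_smul,
    aux_sum (wMinus m ρ) (aux_inj m ρ hρ) Finset.univ (fun _ _ _ _ => Finset.mem_univ _) q]
end
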